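/- arXiv:2210.11523 — 2 statements merged into one kernel-verified Lean document; each statement's English description precedes it below -/
import Mathlib

section
/- Let N ≥ 1, let H be an N×N complex Hermitian matrix all of whose eigenvalues lie in {λ₁, λ₂} for real numbers λ₁, λ₂, let ψ ∈ ℂ^N, let M be an N×N complex matrix, and define f(θ) = ⟨ψ, exp(iθH)† · M · exp(iθH) ψ⟩. Then for every α ∈ ℝ with sin((λ₁−λ₂)α) ≠ 0, f is differentiable at every θ ∈ ℝ and f′(θ) = ((λ₁−λ₂)/(2·sin((λ₁−λ₂)α))) · (f(θ+α) − f(θ−α)). -/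
open Matrix Complex

lemma exp_spectral_aux {N : ℕ} (H : Matrix (Fin N) (Fin N) ℂ) (hH : H.IsHermitian) (z : ℂ) :
    NormedSpace.exp (z • H) = (hH.eigenvectorUnitary : Matrix (Fin N) (Fin N) ℂ) *
      diagonal (fun i => Complex.exp (z * (hH.eigenvalues i : ℂ))) *
      (hH.eigenvectorUnitary : Matrix (Fin N) (Fin N) ℂ)ᴴ := by
  set U : Matrix (Fin N) (Fin N) ℂ := (hH.eigenvectorUnitary : Matrix (Fin N) (Fin N) ℂ) with hU
  have h1 : Uᴴ * U = 1 := by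
    have := Unitary.coe_star_mul_self hH.eigenvectorUnitary
    simpa [star_eq_conjTranspose] using this
  have hinv : U⁻¹ = Uᴴ := inv_eq_left_inv h1
  have hu : IsUnit U := IsUnit.of_mul_eq_one _ (mul_eq_one_comm.mp h1)
  have hs : z • H = U * diagonal (fun i => z * (hH.eigenvalues i : ℂ)) * U⁻¹ := by
    rw [hinv]
    have h2 := hH.spectral_theorem
    rw [Unitary.conjStarAlgAut_apply] at h2
    have h3 : diagonal (fun i => z * (hH.eigenvalues i : ℂ))
        = z • diagonal (RCLike.ofReal ∘ hH.eigenvalues : Fin N → ℂ) := by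
      ext i j
      by_cases hij : i = j <;> simp [diagonal, hij]
    rw [h3, Matrix.mul_smul, Matrix.smul_mul]
    congr 1
  rw [hs, Matrix.exp_conj _ _ hu, Matrix.exp_diagonal, hinv]
  congr 3
  ext i
  rw [Pi.coe_exp, Complex.exp_eq_exp_ℂ]

/-- The two-term parameter-shift rule of Schuld et al. in its most general form:
for a Hermitian generator `H` whose eigenvalues all lie in `{λ₁, λ₂}`, the
expectation value `f θ = ⟨ψ, exp(iθH)† M exp(iθH) ψ⟩` satisfies
`f′(θ) = (λ₁−λ₂)/(2 sin((λ₁−λ₂)α)) · (f(θ+α) − f(θ−α))`. -/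
theorem two_term_parameter_shift_rule (N : ℕ) (hN : 1 ≤ N)
    (H : Matrix (Fin N) (Fin N) ℂ) (hH : H.IsHermitian) (l₁ l₂ : ℝ)
    (heig : ∀ i, hH.eigenvalues i ∈ ({l₁, l₂} : Set ℝ))
    (ψ : Fin N → ℂ) (M : Matrix (Fin N) (Fin N) ℂ) (f : ℝ → ℂ)
    (hf : ∀ θ : ℝ, f θ =
      star ψ ⬝ᵥ (((NormedSpace.exp (((θ : ℂ) * I) • H))ᴴ * M *
        NormedSpace.exp (((θ : ℂ) * I) • H)) *ᵥ ψ))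
    (α : ℝ) (hα : Real.sin ((l₁ - l₂) * α) ≠ 0) (θ : ℝ) :
    HasDerivAt f
      ((((l₁ - l₂) / (2 * Real.sin ((l₁ - l₂) * α)) : ℝ) : ℂ) * (f (θ + α) - f (θ - α))) θ := by
  set d := hH.eigenvalues with hd
  obtain ⟨C, hC⟩ : ∃ C : Fin N → Fin N → ℂ, ∀ t : ℝ, f t =
      ∑ j, ∑ k, C j k * Complex.exp ((t : ℂ) * (I * ((d k - d j : ℝ) : ℂ))) := by
    let U : Matrix (Fin N) (Fin N) ℂ := (hH.eigenvectorUnitary : Matrix (Fin N) (Fin N) ℂ)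
    refine ⟨fun j k => star ((Uᴴ *ᵥ ψ) j) * (Uᴴ * M * U) j k * (Uᴴ *ᵥ ψ) k, fun t => ?_⟩
    let E : Matrix (Fin N) (Fin N) ℂ := diagonal (fun i => Complex.exp ((t : ℂ) * I * (d i : ℂ)))
    have h1 : f t = star (Uᴴ *ᵥ ψ) ⬝ᵥ ((Eᴴ * (Uᴴ * M * U) * E) *ᵥ (Uᴴ *ᵥ ψ)) := by
      rw [hf, exp_spectral_aux H hH, star_mulVec, ← dotProduct_mulVec]
      simp only [mulVec_mulVec, conjTranspose_mul, conjTranspose_conjTranspose, Matrix.mul_assoc]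
      rfl
    rw [h1]
    generalize Uᴴ *ᵥ ψ = v
    simp only [E, diagonal_conjTranspose, dotProduct, mulVec, Matrix.mul_diagonal, Matrix.diagonal_mul,
      Finset.mul_sum, Pi.star_apply]
    refine Finset.sum_congr rfl fun j _ => Finset.sum_congr rfl fun k _ => ?_
    have h2 : Complex.exp ((t : ℂ) * (I * ((d k - d j : ℝ) : ℂ))) =
        star (Complex.exp ((t : ℂ) * I * (d j : ℂ))) * Complex.exp ((t : ℂ) * I * (d k : ℂ)) := by
      rw [Complex.star_def, ← Complex.exp_conj, ← Complex.exp_add]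
      congr 1
      simp
      ring
    rw [h2]
    ring
  have hfun : f = fun t : ℝ =>
      ∑ j, ∑ k, C j k * Complex.exp ((t : ℂ) * (I * ((d k - d j : ℝ) : ℂ))) := funext hC
  have hder : HasDerivAt f (∑ j, ∑ k, C j k * (Complex.exp ((θ : ℂ) * (I * ((d k - d j : ℝ) : ℂ)))
      * (1 * (I * ((d k - d j : ℝ) : ℂ))))) θ := by
    rw [hfun]
    refine HasDerivAt.fun_sum fun j _ => HasDerivAt.fun_sum fun k _ => ?_
    exact (((Complex.ofRealCLM.hasDerivAt (x := θ)).mul_const _).cexp).const_mul _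
  convert hder using 1
  rw [hC, hC, ← Finset.sum_sub_distrib, Finset.mul_sum]
  refine Finset.sum_congr rfl fun j _ => ?_
  rw [← Finset.sum_sub_distrib, Finset.mul_sum]
  refine Finset.sum_congr rfl fun k _ => ?_
  have hs : Complex.sin (((l₁ - l₂ : ℝ) : ℂ) * α) ≠ 0 := by
    exact_mod_cast hα
  have key : ∀ w : ℂ, Complex.exp (((θ + α : ℝ) : ℂ) * (I * w)) -
      Complex.exp (((θ - α : ℝ) : ℂ) * (I * w)) =
      Complex.exp ((θ : ℂ) * (I * w)) * (2 * I * Complex.sin (w * α)) := by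
    intro w
    have e1 : ((θ + α : ℝ) : ℂ) * (I * w) = (θ : ℂ) * (I * w) + (w * α) * I := by push_cast; ring
    have e2 : ((θ - α : ℝ) : ℂ) * (I * w) = (θ : ℂ) * (I * w) + (-(w * α)) * I := by push_cast; ring
    rw [e1, e2, Complex.exp_add, Complex.exp_add, Complex.exp_mul_I, Complex.exp_mul_I,
      Complex.cos_neg, Complex.sin_neg]
    ring
  have key2 : (((l₁ - l₂) / (2 * Real.sin ((l₁ - l₂) * α)) : ℝ) : ℂ) *
      (2 * Complex.sin (((d k - d j : ℝ) : ℂ) * α)) = ((d k - d j : ℝ) : ℂ) := by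
    have hc : (((l₁ - l₂) / (2 * Real.sin ((l₁ - l₂) * α)) : ℝ) : ℂ) =
        ((l₁ - l₂ : ℝ) : ℂ) / (2 * Complex.sin (((l₁ - l₂ : ℝ) : ℂ) * α)) := by
      push_cast; rfl
    rw [hc]
    have hcases : d k - d j = 0 ∨ d k - d j = l₁ - l₂ ∨ d k - d j = -(l₁ - l₂) := by
      have hk : d k = l₁ ∨ d k = l₂ := by simpa using heig k
      have hj : d j = l₁ ∨ d j = l₂ := by simpa using heig j
      rcases hk with h | h <;> rcases hj with h' | h' <;> rw [h, h'] <;> simp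
    rcases hcases with h | h | h <;> rw [h]
    · simp
    · field_simp
    · rw [Complex.ofReal_neg, neg_mul, Complex.sin_neg]
      field_simp
  rw [← mul_sub, key]
  linear_combination (C j k * Complex.exp ((θ : ℂ) * (I * ((d k - d j : ℝ) : ℂ))) * I) * key2
end

section
/- Let N ≥ 1, let λ ≠ 0 be real, and let H be an N×N complex Hermitian matrix such that −λ, 0 and λ are all eigenvalues of H. Then there do not exist real numbers ξ₁, ξ₂, ξ₃ and real shifts s₁, s₂, s₃ such that for every vector ψ ∈ ℂ^N and every N×N complex Hermitian matrix M, the function f(θ) = ⟨ψ, exp(iθH)† · M · exp(iθH) ψ⟩ is differentiable with f′(θ) = ξ₁·f(θ+s₁) + ξ₂·f(θ+s₂) + ξ₃·f(θ+s₃) for all θ ∈ ℝ. In particular, the four-term shift rule for generators with eigenvalues −λ, 0, λ is optimal. -/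
open Matrix Complex

/-- The expectation value of the observable `M` in the state `exp(iθH) ψ`. -/
noncomputable def expectationValue (N : ℕ) (H M : Matrix (Fin N) (Fin N) ℂ)
    (ψ : Fin N → ℂ) (θ : ℝ) : ℂ :=
  star ψ ⬝ᵥ (((NormedSpace.exp (((θ : ℂ) * I) • H))ᴴ * M *
    NormedSpace.exp (((θ : ℂ) * I) • H)) *ᵥ ψ)

lemma exp_mulVec_eig {N : ℕ} (A : Matrix (Fin N) (Fin N) ℂ) (v : Fin N → ℂ) (μ : ℂ)
    (h : A *ᵥ v = μ • v) : NormedSpace.exp A *ᵥ v = Complex.exp μ • v := by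
  let : NormedRing (Matrix (Fin N) (Fin N) ℂ) := Matrix.linftyOpNormedRing
  let : NormedAlgebra ℂ (Matrix (Fin N) (Fin N) ℂ) := Matrix.linftyOpNormedAlgebra
  have hpow : ∀ n : ℕ, (A ^ n) *ᵥ v = μ ^ n • v := by
    intro n
    induction n with
    | zero => simp
    | succ k ih =>
      rw [pow_succ, ← Matrix.mulVec_mulVec, h, Matrix.mulVec_smul, ih, smul_smul, pow_succ, mul_comm]
  have h1 := NormedSpace.exp_series_hasSum_exp' (𝕂 := ℂ) A
  have h2 := NormedSpace.exp_series_hasSum_exp' (𝕂 := ℂ) μ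
  let L : Matrix (Fin N) (Fin N) ℂ →+ (Fin N → ℂ) :=
    { toFun := fun X => X *ᵥ v
      map_zero' := by simp
      map_add' := fun X Y => Matrix.add_mulVec X Y v }
  have hL : Continuous L := by
    change Continuous (fun X : Matrix (Fin N) (Fin N) ℂ => X *ᵥ v)
    fun_prop
  have h3 := h1.map L hL
  have h4 := h2.smul_const v
  rw [Complex.exp_eq_exp_ℂ]
  refine h3.unique ?_
  convert h4 using 2 with n
  change ((n.factorial : ℂ)⁻¹ • A ^ n) *ᵥ v = _
  rw [Matrix.smul_mulVec, hpow, smul_smul, smul_eq_mul]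

lemma ev_rank_one {N : ℕ} (H : Matrix (Fin N) (Fin N) ℂ) (hH : H.IsHermitian)
    (a b ψ : Fin N → ℂ) (α β : ℝ) (ha : H *ᵥ a = (α : ℂ) • a) (hb : H *ᵥ b = (β : ℂ) • b)
    (θ : ℝ) : expectationValue N H (vecMulVec a (star b)) ψ θ =
      (star ψ ⬝ᵥ a) * (star b ⬝ᵥ ψ) * Complex.exp ((θ : ℂ) * (I * ((β : ℂ) - α))) := by
  have key : ∀ (c : Fin N → ℂ) (γ : ℝ), H *ᵥ c = (γ : ℂ) • c →
      (NormedSpace.exp (((θ : ℂ) * I) • H))ᴴ *ᵥ c = Complex.exp (-((θ : ℂ) * I * γ)) • c := by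
    intro c γ hc
    rw [← Matrix.exp_conjTranspose]
    apply exp_mulVec_eig
    rw [conjTranspose_smul, hH.eq, Matrix.smul_mulVec, hc, smul_smul]
    congr 1
    simp
  have h1 := key a α ha
  have h2 := congrArg star (key b β hb)
  rw [Matrix.star_mulVec, conjTranspose_conjTranspose] at h2
  unfold expectationValue
  rw [Matrix.mul_vecMulVec, Matrix.vecMulVec_mul, h1, h2, Matrix.vecMulVec_mulVec]
  have h3 : star (Complex.exp (-((θ : ℂ) * I * β))) = Complex.exp ((θ : ℂ) * I * β) := by
    rw [Complex.star_def, ← Complex.exp_conj]; simp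
  have h4 : Complex.exp ((θ : ℂ) * (I * ((β : ℂ) - α))) =
      Complex.exp (-((θ : ℂ) * I * α)) * Complex.exp ((θ : ℂ) * I * β) := by
    rw [← Complex.exp_add]; congr 1; ring
  rw [star_smul, h3, h4]
  simp only [smul_dotProduct, dotProduct_smul, smul_eq_mul, op_smul_eq_smul]
  ring

lemma ev_comb {N : ℕ} (H A B : Matrix (Fin N) (Fin N) ℂ) (c d : ℂ) (ψ : Fin N → ℂ) (θ : ℝ) :
    expectationValue N H (c • A + d • B) ψ θ =
      c * expectationValue N H A ψ θ + d * expectationValue N H B ψ θ := by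
  unfold expectationValue
  simp [Matrix.mul_add, Matrix.add_mul, Matrix.add_mulVec, Matrix.smul_mulVec]

lemma exists_good {N : ℕ} (a b : Fin N → ℂ) (ha : a ≠ 0) (hb : b ≠ 0) :
    ∃ ψ : Fin N → ℂ, (star ψ ⬝ᵥ a) * (star b ⬝ᵥ ψ) ≠ 0 := by
  have haa : star a ⬝ᵥ a ≠ 0 := fun h => ha (by open scoped ComplexOrder in exact dotProduct_star_self_eq_zero.mp h)
  have hbb : star b ⬝ᵥ b ≠ 0 := fun h => hb (by open scoped ComplexOrder in exact dotProduct_star_self_eq_zero.mp h)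
  by_cases h : star b ⬝ᵥ a = 0
  · refine ⟨a + b, ?_⟩
    rw [star_add, add_dotProduct, dotProduct_add, h, add_zero, zero_add]
    exact mul_ne_zero haa hbb
  · exact ⟨a, mul_ne_zero haa h⟩

lemma freq_rule {N : ℕ} (H : Matrix (Fin N) (Fin N) ℂ) (hH : H.IsHermitian)
    (ξ₁ ξ₂ ξ₃ s₁ s₂ s₃ : ℝ)
    (hr : ∀ (ψ : Fin N → ℂ) (M : Matrix (Fin N) (Fin N) ℂ), M.IsHermitian →
        ∀ θ : ℝ,
          HasDerivAt (expectationValue N H M ψ)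
            ((ξ₁ : ℂ) * expectationValue N H M ψ (θ + s₁) +
             (ξ₂ : ℂ) * expectationValue N H M ψ (θ + s₂) +
             (ξ₃ : ℂ) * expectationValue N H M ψ (θ + s₃)) θ)
    (α β : ℝ) (ha : ∃ a : Fin N → ℂ, a ≠ 0 ∧ H *ᵥ a = (α : ℂ) • a)
    (hb : ∃ b : Fin N → ℂ, b ≠ 0 ∧ H *ᵥ b = (β : ℂ) • b) :
    ξ₁ * Complex.exp (s₁ * (I * ((β : ℂ) - α))) + ξ₂ * Complex.exp (s₂ * (I * ((β : ℂ) - α))) +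
      ξ₃ * Complex.exp (s₃ * (I * ((β : ℂ) - α))) = I * ((β : ℂ) - α) := by
  obtain ⟨a, ha0, ha⟩ := ha
  obtain ⟨b, hb0, hb⟩ := hb
  obtain ⟨ψ, hψ⟩ := exists_good a b ha0 hb0
  set M := vecMulVec a (star b) with hM
  have hA : (M + Mᴴ).IsHermitian := by
    rw [Matrix.IsHermitian, conjTranspose_add, conjTranspose_conjTranspose, add_comm]
  have hB : (I • (M - Mᴴ)).IsHermitian := by
    rw [Matrix.IsHermitian, conjTranspose_smul, conjTranspose_sub, conjTranspose_conjTranspose]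
    simp [smul_sub]
    abel
  have hMd : M = (1 / 2 : ℂ) • (M + Mᴴ) + (-I / 2 : ℂ) • (I • (M - Mᴴ)) := by
    rw [smul_smul, show -I / 2 * I = (1 / 2 : ℂ) by linear_combination (-1 / 2 : ℂ) * I_sq]
    module
  have hfun : expectationValue N H M ψ = fun θ =>
      (1 / 2 : ℂ) * expectationValue N H (M + Mᴴ) ψ θ +
        (-I / 2 : ℂ) * expectationValue N H (I • (M - Mᴴ)) ψ θ := by
    funext θ
    rw [← ev_comb, ← hMd]
  have hd1 := ((hr ψ _ hA 0).const_mul (1 / 2 : ℂ)).add ((hr ψ _ hB 0).const_mul (-I / 2 : ℂ))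
  have hd2 : HasDerivAt (expectationValue N H M ψ)
      ((ξ₁ : ℂ) * expectationValue N H M ψ (0 + s₁) +
             (ξ₂ : ℂ) * expectationValue N H M ψ (0 + s₂) +
             (ξ₃ : ℂ) * expectationValue N H M ψ (0 + s₃)) 0 := by
    rw [hfun]
    exact hd1.congr_deriv (by beta_reduce; ring)
  have hfun2 : expectationValue N H M ψ = fun θ : ℝ =>
      (star ψ ⬝ᵥ a) * (star b ⬝ᵥ ψ) * Complex.exp ((θ : ℂ) * (I * ((β : ℂ) - α))) := by
    funext θ
    exact ev_rank_one H hH a b ψ α β ha hb θ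
  have hd3 : HasDerivAt (expectationValue N H M ψ)
      ((star ψ ⬝ᵥ a) * (star b ⬝ᵥ ψ) * (I * ((β : ℂ) - α))) 0 := by
    rw [hfun2]
    have h0 : HasDerivAt (fun θ : ℝ => (θ : ℂ)) 1 0 := Complex.ofRealCLM.hasDerivAt
    have := ((h0.mul_const (I * ((β : ℂ) - α))).cexp).const_mul ((star ψ ⬝ᵥ a) * (star b ⬝ᵥ ψ))
    simpa using this
  have heq := hd2.unique hd3
  rw [hfun2] at heq
  simp only [zero_add] at heq
  apply mul_left_cancel₀ hψ
  rw [← heq]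
  ring

lemma algebra_core (c x y z X Y Z p q r : ℂ) (hc : c ≠ 0) (hX : x * X = 1) (hY : y * Y = 1)
    (hZ : z * Z = 1) (h0 : p + q + r = 0) (h1 : p * x + q * y + r * z = c)
    (h2 : p * x ^ 2 + q * y ^ 2 + r * z ^ 2 = 2 * c)
    (h3 : p * X + q * Y + r * Z = -c)
    (h4 : p * X ^ 2 + q * Y ^ 2 + r * Z ^ 2 = -(2 * c)) : False := by
  -- test polynomials `R(t) t⁻¹` and `R(t) t⁻²`
  have k1 : p * (x ^ 2 - (x + y + z) * x + (x * y + y * z + z * x) - x * y * z * X) +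
      q * (y ^ 2 - (x + y + z) * y + (x * y + y * z + z * x) - x * y * z * Y) +
      r * (z ^ 2 - (x + y + z) * z + (x * y + y * z + z * x) - x * y * z * Z) = 0 := by
    linear_combination -p * y * z * hX - q * x * z * hY - r * x * y * hZ
  have k2 : p * (x - (x + y + z) + (x * y + y * z + z * x) * X - x * y * z * X ^ 2) +
      q * (y - (x + y + z) + (x * y + y * z + z * x) * Y - x * y * z * Y ^ 2) +
      r * (z - (x + y + z) + (x * y + y * z + z * x) * Z - x * y * z * Z ^ 2) = 0 := by
    linear_combination p * (y + z - y * z * X) * hX + q * (x + z - x * z * Y) * hY +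
      r * (x + y - x * y * Z) * hZ
  have m1 : c * (2 - (x + y + z) + x * y * z) = 0 := by
    linear_combination k1 - h2 + (x + y + z) * h1 - (x * y + y * z + z * x) * h0 + x * y * z * h3
  have m2 : c * (1 - (x * y + y * z + z * x) + 2 * (x * y * z)) = 0 := by
    linear_combination k2 - h1 + (x + y + z) * h0 - (x * y + y * z + z * x) * h3 + x * y * z * h4
  have n1 := (mul_eq_zero.mp m1).resolve_left hc
  have n2 := (mul_eq_zero.mp m2).resolve_left hc
  have R0 : (1 - x) * ((1 - y) * (1 - z)) = 0 := by linear_combination n1 - n2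
  have R1 : (1 - y) * (1 - z) + (1 - x) * (1 - z) + (1 - x) * (1 - y) = 0 := by
    linear_combination 2 * n1 - n2
  -- one nontrivial node cannot suffice
  have fin : ∀ t u : ℂ, u * (t - 1) = c → u * (t ^ 2 - 1) = 2 * c → False := by
    intro t u g1 g2
    have g3 : c * (t - 1) = 0 := by linear_combination g2 - (t + 1) * g1
    have g4 := (mul_eq_zero.mp g3).resolve_left hc
    rw [g4, mul_zero] at g1
    exact hc g1.symm
  have two : ∀ a b d : ℂ, (1 - a) = 0 →
      (1 - b) * (1 - d) + (1 - a) * (1 - d) + (1 - a) * (1 - b) = 0 → (1 - b) = 0 ∨ (1 - d) = 0 := by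
    intro a b d h h'
    rw [h] at h'
    simpa using h'
  have fxy : 1 - x = 0 → 1 - y = 0 → False := fun hx hy =>
    fin z r (by linear_combination h1 - h0 + p * hx + q * hy)
      (by linear_combination h2 - h0 + p * (1 + x) * hx + q * (1 + y) * hy)
  have fxz : 1 - x = 0 → 1 - z = 0 → False := fun hx hz =>
    fin y q (by linear_combination h1 - h0 + p * hx + r * hz)
      (by linear_combination h2 - h0 + p * (1 + x) * hx + r * (1 + z) * hz)
  have fyz : 1 - y = 0 → 1 - z = 0 → False := fun hy hz =>
    fin x p (by linear_combination h1 - h0 + q * hy + r * hz)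
      (by linear_combination h2 - h0 + q * (1 + y) * hy + r * (1 + z) * hz)
  rcases mul_eq_zero.mp R0 with h | h
  · rcases two x y z h R1 with h' | h'
    · exact fxy h h'
    · exact fxz h h'
  · rcases mul_eq_zero.mp h with h | h
    · rcases two y x z h (by linear_combination R1) with h' | h'
      · exact fxy h' h
      · exact fyz h h'
    · rcases two z x y h (by linear_combination R1) with h' | h'
      · exact fxz h' h
      · exact fyz h' h

/-- Anselmetti et al.'s no-go conjecture: a Hermitian generator having `−λ`, `0`
and `λ` among its eigenvalues admits no three-term parameter-shift rule; hence
the four-term shift rule is optimal. -/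
theorem no_three_term_shift_rule (N : ℕ) (hN : 1 ≤ N)
    (lam : ℝ) (hlam : lam ≠ 0)
    (H : Matrix (Fin N) (Fin N) ℂ) (hH : H.IsHermitian)
    (hneg : ∃ u : Fin N → ℂ, u ≠ 0 ∧ H *ᵥ u = (-(lam : ℂ)) • u)
    (hzero : ∃ v : Fin N → ℂ, v ≠ 0 ∧ H *ᵥ v = (0 : ℂ) • v)
    (hpos : ∃ w : Fin N → ℂ, w ≠ 0 ∧ H *ᵥ w = ((lam : ℂ)) • w) :
    ¬ ∃ (ξ₁ ξ₂ ξ₃ s₁ s₂ s₃ : ℝ),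
      ∀ (ψ : Fin N → ℂ) (M : Matrix (Fin N) (Fin N) ℂ), M.IsHermitian →
        ∀ θ : ℝ,
          HasDerivAt (expectationValue N H M ψ)
            ((ξ₁ : ℂ) * expectationValue N H M ψ (θ + s₁) +
             (ξ₂ : ℂ) * expectationValue N H M ψ (θ + s₂) +
             (ξ₃ : ℂ) * expectationValue N H M ψ (θ + s₃)) θ := by
  rintro ⟨ξ₁, ξ₂, ξ₃, s₁, s₂, s₃, hr⟩
  have hneg' : ∃ u : Fin N → ℂ, u ≠ 0 ∧ H *ᵥ u = ((-lam : ℝ) : ℂ) • u := by simpa using hneg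
  have hzero' : ∃ u : Fin N → ℂ, u ≠ 0 ∧ H *ᵥ u = ((0 : ℝ) : ℂ) • u := by simpa using hzero
  have F := freq_rule H hH ξ₁ ξ₂ ξ₃ s₁ s₂ s₃ hr
  have f0 := F 0 0 hzero' hzero'
  have f1 := F 0 lam hzero' hpos
  have f2 := F (-lam) lam hneg' hpos
  have f3 := F lam 0 hpos hzero'
  have f4 := F lam (-lam) hpos hneg'
  have e2 : ∀ s : ℝ, Complex.exp (s * (I * ((lam : ℂ) - ((-lam : ℝ) : ℂ)))) =
      Complex.exp (s * (I * ((lam : ℂ) - ((0 : ℝ) : ℂ)))) ^ 2 := by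
    intro s
    rw [← Complex.exp_nat_mul]; congr 1; push_cast; ring
  have e4 : ∀ s : ℝ, Complex.exp (s * (I * (((-lam : ℝ) : ℂ) - (lam : ℂ)))) =
      Complex.exp (s * (I * (((0 : ℝ) : ℂ) - (lam : ℂ)))) ^ 2 := by
    intro s
    rw [← Complex.exp_nat_mul]; congr 1; push_cast; ring
  have einv : ∀ s : ℝ, Complex.exp (s * (I * ((lam : ℂ) - ((0 : ℝ) : ℂ)))) *
      Complex.exp (s * (I * (((0 : ℝ) : ℂ) - (lam : ℂ)))) = 1 := by
    intro s
    rw [← Complex.exp_add, ← Complex.exp_zero]; congr 1; ring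
  rw [e2, e2, e2] at f2
  rw [e4, e4, e4] at f4
  refine algebra_core (I * lam) _ _ _ _ _ _ ξ₁ ξ₂ ξ₃ ?_ (einv s₁) (einv s₂) (einv s₃) ?_ ?_ ?_ ?_ ?_
  · simp [hlam]
  · simpa using f0
  · rw [f1]; simp
  · rw [f2]; push_cast; ring
  · rw [f3]; simp
  · rw [f4]; push_cast; ring
end
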